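/- arXiv:1811.11219 — 2 statements merged into one kernel-verified Lean document; each statement's English description precedes it below -/
import Mathlib

section
/- The map β₁ sending a partition λ with no repeated odd part to the sequence ζ with ζ_{2i−1} = ⌊(λ_i + 1)/2⌋ and ζ_{2i} = ⌊λ_i/2⌋ for all i ≥ 1 is a bijection from the set 𝒜 of partitions with no repeated odd part onto the set 𝒞 of partitions ζ satisfying ζ_{2i−1} − ζ_{2i} ≤ 1 for all i ≥ 1; its inverse sends ζ to the partition λ with λ_i = ζ_{2i−1} + ζ_{2i} for all i ≥ 1. Moreover, for all n, β₁ restricts to a bijection between partitions of n in 𝒜 and partitions of n in 𝒞. -/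
/-- A partition, modeled as a nonincreasing function `ℕ → ℕ` with only finitely many
nonzero terms. -/
def IsPartitionFun (f : ℕ → ℕ) : Prop :=
  (∀ i j, i ≤ j → f j ≤ f i) ∧ ∃ N, ∀ i, N ≤ i → f i = 0

/-- The sum of the parts of a partition. -/
noncomputable def partSum (f : ℕ → ℕ) : ℕ := ∑' i, f i

/-- `𝒜`: partitions with no repeated odd part. -/
def memA (f : ℕ → ℕ) : Prop :=
  IsPartitionFun f ∧ ∀ i j, i ≠ j → Odd (f i) → f i ≠ f j

/-- `𝒞`: partitions `ζ` satisfying `ζ_{2i−1} − ζ_{2i} ≤ 1` for all `i ≥ 1`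
(zero-based: `ζ(2i) − ζ(2i+1) ≤ 1`). -/
def memC (f : ℕ → ℕ) : Prop :=
  IsPartitionFun f ∧ ∀ i, f (2 * i) ≤ f (2 * i + 1) + 1

/-- The map `β₁`, sending `λ` to `ζ` with `ζ_{2i−1} = ⌊(λ_i + 1)/2⌋` and
`ζ_{2i} = ⌊λ_i/2⌋` (zero-based indexing). -/
def beta1 (lam : ℕ → ℕ) : ℕ → ℕ :=
  fun n => if n % 2 = 0 then (lam (n / 2) + 1) / 2 else lam (n / 2) / 2

/-- The inverse map, sending `ζ` to `λ` with `λ_i = ζ_{2i−1} + ζ_{2i}`. -/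
def beta1Inv (zeta : ℕ → ℕ) : ℕ → ℕ :=
  fun i => zeta (2 * i) + zeta (2 * i + 1)

/-!
`β₁` splits each part into its upper and lower half, so adding consecutive terms undoes it, and
this also shows that the sum is preserved. Upper and lower halves differ by at most one, and
conversely two such numbers are the halves of their sum. The sequence of halves is nonincreasing
because `⌈b / 2⌉ ≤ ⌊a / 2⌋` whenever `b ≤ a`, except when `a = b` is odd. Finally, if two pair sums
of a nonincreasing sequence agree, the four terms involved are equal, so the common sum is even.
-/

section Halves

open Filter

variable {f g : ℕ → ℕ}

theorem isPartitionFun_iff_antitone_and_eventuallyEq_zero :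
    IsPartitionFun f ↔ Antitone f ∧ f =ᶠ[atTop] 0 :=
  and_congr Iff.rfl eventually_atTop.symm

theorem IsPartitionFun.antitone (hf : IsPartitionFun f) : Antitone f :=
  (isPartitionFun_iff_antitone_and_eventuallyEq_zero.1 hf).1

theorem IsPartitionFun.eventuallyEq_zero (hf : IsPartitionFun f) : f =ᶠ[atTop] 0 :=
  (isPartitionFun_iff_antitone_and_eventuallyEq_zero.1 hf).2

theorem tendsto_two_mul_atTop : Tendsto (fun i : ℕ ↦ 2 * i) atTop atTop :=
  tendsto_id.const_mul_atTop' two_pos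

theorem tendsto_two_mul_add_one_atTop : Tendsto (fun i : ℕ ↦ 2 * i + 1) atTop atTop :=
  (tendsto_add_atTop_nat 1).comp tendsto_two_mul_atTop

theorem summable_of_eventuallyEq_zero_atTop {M : Type*} [AddCommMonoid M] [TopologicalSpace M]
    {u : ℕ → M} (hu : u =ᶠ[atTop] 0) : Summable u :=
  summable_of_hasFiniteSupport (eventually_cofinite.1 (Nat.cofinite_eq_atTop ▸ hu))

theorem beta1_two_mul (f : ℕ → ℕ) (i : ℕ) : beta1 f (2 * i) = (f i + 1) / 2 := by
  simp [beta1]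

theorem beta1_two_mul_add_one (f : ℕ → ℕ) (i : ℕ) : beta1 f (2 * i + 1) = f i / 2 := by
  simp [beta1, Nat.add_mod, Nat.mul_add_div]

theorem beta1_eventuallyEq_zero (hf : f =ᶠ[atTop] 0) : beta1 f =ᶠ[atTop] 0 := by
  filter_upwards [(Nat.tendsto_div_const_atTop two_ne_zero).eventually hf] with n hn
  simp_all [beta1]

theorem antitone_beta1_iff : Antitone (beta1 f) ↔ ∀ i, (f (i + 1) + 1) / 2 ≤ f i / 2 := by
  constructor
  · intro hanti i
    simpa only [beta1_two_mul, beta1_two_mul_add_one] using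
      hanti (show 2 * i + 1 ≤ 2 * (i + 1) by lia)
  · intro hhalves
    refine antitone_nat_of_succ_le fun n ↦ ?_
    obtain ⟨i, rfl | rfl⟩ := n.even_or_odd'
    · rw [beta1_two_mul, beta1_two_mul_add_one]
      lia
    · rw [show 2 * i + 1 + 1 = 2 * (i + 1) by ring, beta1_two_mul, beta1_two_mul_add_one]
      exact hhalves i

theorem add_one_div_two_le_div_two {a b : ℕ} (hle : b ≤ a) (hne : Odd a → a ≠ b) :
    (b + 1) / 2 ≤ a / 2 := by
  rw [Nat.odd_iff] at hne
  lia

theorem memC_beta1 (hf : memA f) : memC (beta1 f) := by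
  obtain ⟨hpart, hodd⟩ := hf
  have hanti : Antitone (beta1 f) := antitone_beta1_iff.2 fun i ↦
    add_one_div_two_le_div_two (hpart.antitone i.le_succ) (hodd i (i + 1) i.succ_ne_self.symm)
  refine ⟨isPartitionFun_iff_antitone_and_eventuallyEq_zero.2
    ⟨hanti, beta1_eventuallyEq_zero hpart.eventuallyEq_zero⟩, fun i ↦ ?_⟩
  rw [beta1_two_mul, beta1_two_mul_add_one]
  lia

theorem beta1Inv_eventuallyEq_zero (hg : g =ᶠ[atTop] 0) : beta1Inv g =ᶠ[atTop] 0 := by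
  filter_upwards [tendsto_two_mul_atTop.eventually hg,
    tendsto_two_mul_add_one_atTop.eventually hg] with i heven hodd
  simp_all [beta1Inv]

theorem antitone_beta1Inv (hg : Antitone g) : Antitone (beta1Inv g) := fun i j hij ↦
  Nat.add_le_add (hg (show 2 * i ≤ 2 * j by lia)) (hg (show 2 * i + 1 ≤ 2 * j + 1 by lia))

theorem even_beta1Inv_of_eq (hg : Antitone g) {i j : ℕ} (hij : i < j)
    (heq : beta1Inv g i = beta1Inv g j) : Even (beta1Inv g i) := by
  have hi : g (2 * i + 1) ≤ g (2 * i) := hg (Nat.le_succ _)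
  have hmid : g (2 * j) ≤ g (2 * i + 1) := hg (by lia)
  have hj : g (2 * j + 1) ≤ g (2 * j) := hg (Nat.le_succ _)
  simp only [beta1Inv] at heq ⊢
  have hpair : g (2 * i) = g (2 * i + 1) := by lia
  exact ⟨g (2 * i + 1), by rw [hpair]⟩

theorem memA_beta1Inv (hg : IsPartitionFun g) : memA (beta1Inv g) := by
  refine ⟨isPartitionFun_iff_antitone_and_eventuallyEq_zero.2
    ⟨antitone_beta1Inv hg.antitone, beta1Inv_eventuallyEq_zero hg.eventuallyEq_zero⟩, ?_⟩
  intro i j hne hodd heq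
  rw [← Nat.not_even_iff_odd] at hodd
  rcases hne.lt_or_gt with hij | hji
  · exact hodd (even_beta1Inv_of_eq hg.antitone hij heq)
  · exact hodd (heq ▸ even_beta1Inv_of_eq hg.antitone hji heq.symm)

theorem partSum_beta1Inv (hg : g =ᶠ[atTop] 0) : partSum (beta1Inv g) = partSum g := by
  have heven : Summable fun i ↦ g (2 * i) :=
    summable_of_eventuallyEq_zero_atTop (tendsto_two_mul_atTop.eventually hg)
  have hodd : Summable fun i ↦ g (2 * i + 1) :=
    summable_of_eventuallyEq_zero_atTop (tendsto_two_mul_add_one_atTop.eventually hg)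
  exact (heven.tsum_add hodd).trans (tsum_even_add_odd heven hodd)

theorem beta1Inv_beta1 (f : ℕ → ℕ) : beta1Inv (beta1 f) = f := by
  funext i
  rw [beta1Inv, beta1_two_mul, beta1_two_mul_add_one]
  lia

theorem beta1_beta1Inv_of_le_of_le_add_one (hle : ∀ i, g (2 * i + 1) ≤ g (2 * i))
    (hle_add_one : ∀ i, g (2 * i) ≤ g (2 * i + 1) + 1) : beta1 (beta1Inv g) = g := by
  have hhalves (i : ℕ) :
      (beta1Inv g i + 1) / 2 = g (2 * i) ∧ beta1Inv g i / 2 = g (2 * i + 1) := by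
    have hi := hle i
    have hi_add_one := hle_add_one i
    rw [beta1Inv]
    lia
  funext n
  obtain ⟨i, rfl | rfl⟩ := n.even_or_odd'
  · exact (beta1_two_mul _ i).trans (hhalves i).1
  · exact (beta1_two_mul_add_one _ i).trans (hhalves i).2

theorem beta1_beta1Inv (hg : memC g) : beta1 (beta1Inv g) = g :=
  beta1_beta1Inv_of_le_of_le_add_one (fun _ ↦ hg.1.antitone (Nat.le_succ _)) hg.2

theorem partSum_beta1 (hf : f =ᶠ[atTop] 0) : partSum (beta1 f) = partSum f := by
  rw [← partSum_beta1Inv (beta1_eventuallyEq_zero hf), beta1Inv_beta1]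

end Halves

/-- `β₁` is a bijection from `𝒜` (partitions with no repeated odd part) onto `𝒞`
(partitions with `ζ_{2i−1} − ζ_{2i} ≤ 1` for all `i`), with inverse
`ζ ↦ (ζ_{2i−1} + ζ_{2i})_i`; moreover it preserves the number partitioned,
hence restricts to a bijection between partitions of `n` in `𝒜` and in `𝒞`
for every `n`. -/
theorem beta_one_bijection :
    (∀ f, memA f → memC (beta1 f)) ∧
    (∀ g, memC g → memA (beta1Inv g)) ∧
    (∀ f, memA f → beta1Inv (beta1 f) = f) ∧
    (∀ g, memC g → beta1 (beta1Inv g) = g) ∧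
    (∀ f, memA f → partSum (beta1 f) = partSum f) ∧
    (∀ n : ℕ, Set.BijOn beta1 {f | memA f ∧ partSum f = n} {g | memC g ∧ partSum g = n}) := by
  refine ⟨fun _ ↦ memC_beta1, fun _ hg ↦ memA_beta1Inv hg.1, fun f _ ↦ beta1Inv_beta1 f,
    fun _ ↦ beta1_beta1Inv, fun _ hf ↦ partSum_beta1 hf.1.eventuallyEq_zero, fun n ↦ ?_⟩
  have hinv : Set.InvOn beta1Inv beta1 {f | memA f ∧ partSum f = n} {g | memC g ∧ partSum g = n} :=
    ⟨fun f _ ↦ beta1Inv_beta1 f, fun _ hg ↦ beta1_beta1Inv hg.1⟩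
  refine hinv.bijOn ?_ ?_
  · rintro f ⟨hf, hsum⟩
    exact ⟨memC_beta1 hf, (partSum_beta1 hf.1.eventuallyEq_zero).trans hsum⟩
  · rintro g ⟨hg, hsum⟩
    exact ⟨memA_beta1Inv hg.1, (partSum_beta1Inv hg.1.eventuallyEq_zero).trans hsum⟩
end

section
/- A partition μ has only odd parts, each occurring with even multiplicity, if and only if its conjugate ξ = μ′ satisfies: every term ξ_i is even, and ξ_{2i} = ξ_{2i+1} for all i ≥ 1. Consequently, conjugation is a bijection between the set ℬ of partitions of n with only odd parts of even multiplicity and the set 𝒟 of partitions ξ of n with all terms even satisfying ξ_{2i} = ξ_{2i+1} for all i ≥ 1. -/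
/-- The conjugate partition: its zero-based `i`-th term is the number of parts
that are at least `i+1`. -/
noncomputable def conjFun (f : ℕ → ℕ) : ℕ → ℕ := fun i => {j | i + 1 ≤ f j}.ncard

/-- `ℬ`: partitions having only odd parts, each occurring with even multiplicity. -/
noncomputable def memB (f : ℕ → ℕ) : Prop :=
  IsPartitionFun f ∧ (∀ i, 0 < f i → Odd (f i)) ∧
    ∀ k, 0 < k → Even {i | f i = k}.ncard

/-- `𝒟`: partitions `ξ` with every term even and `ξ_{2i} = ξ_{2i+1}` for all `i ≥ 1`
(zero-based: `ξ(2i+1) = ξ(2i+2)`). -/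
def memD (f : ℕ → ℕ) : Prop :=
  IsPartitionFun f ∧ (∀ i, Even (f i)) ∧ ∀ i, f (2 * i + 1) = f (2 * i + 2)

/-!
For a partition `f`, the set of indices `j` with `i < f j` is an initial segment of `ℕ` of
length `conjFun f i`, so `j < conjFun f i ↔ i < f j`. The right-hand side says that `(j, i)` is a
cell of the Young diagram, and conjugation transposes the diagram: it preserves the sum and is an
involution. The same equivalence shows that the part `k + 1` occurs exactly at the indices in
`[conjFun f (k + 1), conjFun f k)`. Hence even parts are absent iff `conjFun f` is constant on each
pair `2i + 1`, `2i + 2`, and all multiplicities are even iff consecutive terms of `conjFun f` have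
equal parity; since `conjFun f` is eventually zero, the latter means that all its terms are even.
-/

theorem eq_Iio_ncard_of_isLowerSet {s : Set ℕ} (hs : IsLowerSet s) (hs_ne : s ≠ Set.univ) :
    s = Set.Iio s.ncard := by
  obtain ⟨n, rfl⟩ := hs.eq_univ_or_Iio.resolve_left hs_ne
  rw [Set.ncard_Iio_nat]

theorem forall_iff_forall_iff_succ_of_exists {P : ℕ → Prop} (hP : ∃ n, P n) :
    (∀ n, P n) ↔ ∀ n, P n ↔ P (n + 1) := by
  refine ⟨fun h n => iff_of_true (h n) (h (n + 1)), fun iff_succ => ?_⟩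
  have iff_zero (n : ℕ) : P n ↔ P 0 := by
    induction n with
    | zero => rfl
    | succ n ih => exact (iff_succ n).symm.trans ih
  obtain ⟨m, hm⟩ := hP
  exact fun n => (iff_zero n).2 ((iff_zero m).1 hm)

theorem partSum_eq_sum_range {f : ℕ → ℕ} {N : ℕ} (hN : ∀ i, N ≤ i → f i = 0) :
    partSum f = ∑ i ∈ Finset.range N, f i :=
  tsum_eq_sum fun i hi => hN i (not_lt.1 (mt Finset.mem_range.2 hi))

namespace IsPartitionFun

variable {f : ℕ → ℕ}

theorem antitone_s8 (hf : IsPartitionFun f) : Antitone f := fun i j => hf.1 i j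

theorem setOf_lt_eq_Iio_conjFun (hf : IsPartitionFun f) (i : ℕ) :
    {j | i < f j} = Set.Iio (conjFun f i) := by
  obtain ⟨N, hN⟩ := hf.2
  have isLowerSet : IsLowerSet {j | i < f j} := fun _ _ hle hlt => hlt.trans_le (hf.antitone_s8 hle)
  have ne_univ : {j | i < f j} ≠ Set.univ :=
    (Set.ne_univ_iff_exists_notMem _).2 ⟨N, by simp [hN N le_rfl]⟩
  exact eq_Iio_ncard_of_isLowerSet isLowerSet ne_univ

theorem lt_conjFun_iff (hf : IsPartitionFun f) {i j : ℕ} : j < conjFun f i ↔ i < f j :=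
  (Set.ext_iff.1 (hf.setOf_lt_eq_Iio_conjFun i) j).symm

theorem conjFun_le_iff (hf : IsPartitionFun f) {i j : ℕ} : conjFun f i ≤ j ↔ f j ≤ i := by
  simpa only [not_lt] using not_congr (hf.lt_conjFun_iff (i := i) (j := j))

protected theorem conjFun (hf : IsPartitionFun f) : IsPartitionFun (conjFun f) :=
  ⟨fun _ _ hij => hf.conjFun_le_iff.2 ((hf.conjFun_le_iff.1 le_rfl).trans hij),
    f 0, fun _ hi => Nat.le_zero.1 (hf.conjFun_le_iff.2 hi)⟩

theorem conjFun_conjFun (hf : IsPartitionFun f) : conjFun (conjFun f) = f :=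
  funext fun _ => eq_of_forall_lt_iff fun _ => hf.conjFun.lt_conjFun_iff.trans hf.lt_conjFun_iff

theorem partSum_conjFun (hf : IsPartitionFun f) : partSum (conjFun f) = partSum f := by
  obtain ⟨N, f_eq_zero⟩ := hf.2
  obtain ⟨M, conjFun_eq_zero⟩ := hf.conjFun.2
  have mem_cells_iff (i j : ℕ) :
      i ∈ Finset.range M ∧ j ∈ Finset.range (conjFun f i) ↔
        i ∈ Finset.range (f j) ∧ j ∈ Finset.range N := by
    have := hf.lt_conjFun_iff (i := i) (j := j)
    have := f_eq_zero j
    have := conjFun_eq_zero i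
    simp only [Finset.mem_range]
    omega
  calc
    partSum (conjFun f) = ∑ i ∈ Finset.range M, ∑ _j ∈ Finset.range (conjFun f i), 1 := by
      simpa using partSum_eq_sum_range conjFun_eq_zero
    _ = ∑ j ∈ Finset.range N, ∑ _i ∈ Finset.range (f j), 1 := Finset.sum_comm' mem_cells_iff
    _ = partSum f := by simpa using (partSum_eq_sum_range f_eq_zero).symm

theorem setOf_eq_succ_eq_Ico_conjFun (hf : IsPartitionFun f) (k : ℕ) :
    {i | f i = k + 1} = Set.Ico (conjFun f (k + 1)) (conjFun f k) := by
  ext i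
  rw [Set.mem_Ico, hf.conjFun_le_iff, hf.lt_conjFun_iff, Set.mem_ofPred_eq]
  omega

theorem ncard_setOf_eq_succ (hf : IsPartitionFun f) (k : ℕ) :
    {i | f i = k + 1}.ncard = conjFun f k - conjFun f (k + 1) := by
  rw [hf.setOf_eq_succ_eq_Ico_conjFun, Set.ncard_Ico_nat]

theorem conjFun_eq_conjFun_succ_iff (hf : IsPartitionFun f) {k : ℕ} :
    conjFun f k = conjFun f (k + 1) ↔ ∀ i, f i ≠ k + 1 := by
  have conjFun_succ_le : conjFun f (k + 1) ≤ conjFun f k := hf.conjFun.antitone_s8 k.le_succ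
  calc
    conjFun f k = conjFun f (k + 1) ↔ conjFun f k ≤ conjFun f (k + 1) :=
      conjFun_succ_le.ge_iff_eq'.symm
    _ ↔ {i | f i = k + 1} = ∅ := by
      rw [hf.setOf_eq_succ_eq_Ico_conjFun, Set.Ico_eq_empty_iff, not_lt]
    _ ↔ ∀ i, f i ≠ k + 1 := Set.eq_empty_iff_forall_notMem

theorem forall_odd_iff_conjFun_eq (hf : IsPartitionFun f) :
    (∀ i, 0 < f i → Odd (f i)) ↔ ∀ i, conjFun f (2 * i + 1) = conjFun f (2 * i + 2) := by
  simp only [hf.conjFun_eq_conjFun_succ_iff]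
  constructor
  · intro odd_parts i j hj
    obtain ⟨m, hm⟩ := odd_parts j (by omega)
    omega
  · intro parts_ne j hj
    by_contra not_odd
    obtain ⟨m, hm⟩ := Nat.not_odd_iff_even.1 not_odd
    exact parts_ne (m - 1) j (by omega)

theorem forall_even_ncard_iff_forall_even_conjFun (hf : IsPartitionFun f) :
    (∀ k, 0 < k → Even {i | f i = k}.ncard) ↔ ∀ i, Even (conjFun f i) := by
  have even_ncard_iff (k : ℕ) :
      Even {i | f i = k + 1}.ncard ↔ (Even (conjFun f k) ↔ Even (conjFun f (k + 1))) := by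
    rw [hf.ncard_setOf_eq_succ, Nat.even_sub (hf.conjFun.antitone_s8 k.le_succ)]
  have exists_even : ∃ i, Even (conjFun f i) := by
    obtain ⟨M, conjFun_eq_zero⟩ := hf.conjFun.2
    exact ⟨M, by simp [conjFun_eq_zero M le_rfl]⟩
  rw [forall_iff_forall_iff_succ_of_exists exists_even]
  simp only [← even_ncard_iff]
  exact ⟨fun h k => h (k + 1) k.succ_pos, fun h k hk => Nat.succ_pred_eq_of_pos hk ▸ h k.pred⟩

theorem memB_iff (hf : IsPartitionFun f) :
    memB f ↔ (∀ i, Even (conjFun f i)) ∧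
      ∀ i, conjFun f (2 * i + 1) = conjFun f (2 * i + 2) := by
  rw [memB, hf.forall_odd_iff_conjFun_eq, hf.forall_even_ncard_iff_forall_even_conjFun,
    and_iff_right hf, and_comm]

theorem memD_conjFun_iff (hf : IsPartitionFun f) : memD (conjFun f) ↔ memB f := by
  rw [memD, hf.memB_iff, and_iff_right hf.conjFun]

theorem memB_conjFun_iff (hf : IsPartitionFun f) : memB (conjFun f) ↔ memD f := by
  rw [← hf.conjFun.memD_conjFun_iff, hf.conjFun_conjFun]

end IsPartitionFun

/-- A partition `μ` has only odd parts, each of even multiplicity, if and only if its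
conjugate `ξ = μ′` has every term even and satisfies `ξ_{2i} = ξ_{2i+1}` for all
`i ≥ 1`.  Consequently conjugation is a bijection between the set `ℬ` of partitions of
`n` with only odd parts of even multiplicity and the set `𝒟` of partitions `ξ` of `n`
with all terms even satisfying `ξ_{2i} = ξ_{2i+1}` for all `i ≥ 1`. -/
theorem conj_B_iff_D :
    (∀ mu : ℕ → ℕ, IsPartitionFun mu →
      (memB mu ↔ ((∀ i, Even (conjFun mu i)) ∧
        ∀ i, conjFun mu (2 * i + 1) = conjFun mu (2 * i + 2)))) ∧
    (∀ n : ℕ, Set.BijOn conjFun {f | memB f ∧ partSum f = n}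
      {g | memD g ∧ partSum g = n}) := by
  refine ⟨fun _ hmu => hmu.memB_iff, fun n => Set.InvOn.bijOn (f' := conjFun) ⟨?_, ?_⟩ ?_ ?_⟩
  · exact fun f hf => hf.1.1.conjFun_conjFun
  · exact fun g hg => hg.1.1.conjFun_conjFun
  · rintro f ⟨hf, sum_eq⟩
    exact ⟨hf.1.memD_conjFun_iff.2 hf, hf.1.partSum_conjFun.trans sum_eq⟩
  · rintro g ⟨hg, sum_eq⟩
    exact ⟨hg.1.memB_conjFun_iff.2 hg, hg.1.partSum_conjFun.trans sum_eq⟩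
end
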